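/- Let f̄ : (ℂⁿ,0) → (ℂⁿ,0) be a finite holomorphic map germ and let k = dim_ℂ O_n/⟨f̄⟩. Then there exists a minimal generating set g₁ = 1, g₂, …, g_k of the push-forward module f̄_* O_n consisting of monomials, ordered by nondecreasing polynomial degree, with the following property: for all i, j ≠ 1, whenever the product g_i g_j is expanded as g_i(x) g_j(x) = Σ_{s=1}^{k} Γ^{ij}_s(f̄(x)) g_s(x) with Γ^{ij}_s ∈ O_n, the coefficient germs satisfy Γ^{ij}_s(0) = 0 for every index s ≤ max{i, j}. -/

import Mathlib

open Filter Topology Set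

noncomputable section

/-- `ℂⁿ` with its Euclidean (Hermitian) norm. -/
abbrev Cn (n : ℕ) : Type := EuclideanSpace ℂ (Fin n)

instance germAlgebra {α : Type*} (l : Filter α) : Algebra ℂ (Filter.Germ l ℂ) :=
  Algebra.ofModule
    (fun r x y => by
      induction x using Filter.Germ.inductionOn with | _ f =>
      induction y using Filter.Germ.inductionOn with | _ g =>
      rw [← Filter.Germ.coe_smul, ← Filter.Germ.coe_mul, ← Filter.Germ.coe_mul,
        ← Filter.Germ.coe_smul, smul_mul_assoc])
    (fun r x y => by
      induction x using Filter.Germ.inductionOn with | _ f =>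
      induction y using Filter.Germ.inductionOn with | _ g =>
      rw [← Filter.Germ.coe_smul, ← Filter.Germ.coe_mul, ← Filter.Germ.coe_mul,
        ← Filter.Germ.coe_smul, mul_smul_comm])

/-- The local ℂ-algebra `𝒪_n` of germs at `0` of holomorphic functions on `ℂⁿ`. -/
def Ogerm (n : ℕ) : Subalgebra ℂ (Filter.Germ (𝓝 (0 : Cn n)) ℂ) where
  carrier := {G | ∃ g : Cn n → ℂ, AnalyticAt ℂ g 0 ∧ (g : Filter.Germ (𝓝 (0 : Cn n)) ℂ) = G}
  mul_mem' := by rintro _ _ ⟨g, hg, rfl⟩ ⟨h, hh, rfl⟩; exact ⟨g * h, hg.mul hh, rfl⟩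
  add_mem' := by rintro _ _ ⟨g, hg, rfl⟩ ⟨h, hh, rfl⟩; exact ⟨g + h, hg.add hh, rfl⟩
  algebraMap_mem' := fun c => ⟨fun _ => c, analyticAt_const, by
    rw [Algebra.algebraMap_eq_smul_one, ← Filter.Germ.coe_one, ← Filter.Germ.coe_smul]
    congr 1
    funext x
    simp⟩

/-- The ideal `⟨f⟩` of `𝒪_n` generated by the coordinate functions of `f`. -/
def coordIdeal {n p : ℕ} (f : Cn n → Cn p) : Ideal (Ogerm n) :=
  Ideal.span {G : Ogerm n | ∃ i : Fin p,
    (G : Filter.Germ (𝓝 (0 : Cn n)) ℂ) =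
      ((fun x => f x i : Cn n → ℂ) : Filter.Germ (𝓝 (0 : Cn n)) ℂ)}

/-- The multiplicity `mult f = dim_ℂ 𝒪ₙ/⟨f⟩` of a map germ. -/
def multGerm {n p : ℕ} (f : Cn n → Cn p) : Cardinal :=
  Module.rank ℂ (Ogerm n ⧸ coordIdeal f)

/-- `f` is a finite map germ: `dim_ℂ 𝒪ₙ/f^*(𝔪_p)𝒪ₙ < ∞`. -/
def FiniteGerm {n p : ℕ} (f : Cn n → Cn p) : Prop :=
  multGerm f < Cardinal.aleph0

section helpers

theorem greedy_span {K V M : Type*} [Field K] [AddCommGroup V] [Module K V] [LinearOrder M]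
    (v : M → V) (T : Set M) (hT : T.Finite) (hv : ∀ a, a ∉ T → v a = 0) (a : M) :
    v a ∈ Submodule.span K
      (v '' {b | a ≤ b ∧ v b ∉ Submodule.span K (v '' Set.Ioi b)}) := by
  have main : ∀ m : ℕ, ∀ a, (T ∩ Set.Ici a).ncard = m → v a ∈ Submodule.span K
      (v '' {b | a ≤ b ∧ v b ∉ Submodule.span K (v '' Set.Ioi b)}) := by
    intro m
    induction m using Nat.strong_induction_on with
    | _ m ih =>
      intro a ha
      by_cases haT : a ∈ T
      · by_cases hs : v a ∈ Submodule.span K (v '' Set.Ioi a)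
        · refine (Submodule.span_le.2 ?_) hs
          rintro _ ⟨b, hb, rfl⟩
          have hb' : a < b := hb
          have h1 : (T ∩ Set.Ici b).ncard < m := by
            rw [← ha]
            apply Set.ncard_lt_ncard _ (hT.inter_of_left _)
            refine ⟨fun c hc => ⟨hc.1, hb'.le.trans hc.2⟩, fun h => ?_⟩
            exact absurd (h ⟨haT, le_refl a⟩).2 (not_le.2 hb')
          refine Submodule.span_mono ?_ (ih _ h1 b rfl)
          apply Set.image_mono
          exact fun c hc => ⟨hb'.le.trans hc.1, hc.2⟩
        · exact Submodule.subset_span ⟨a, ⟨le_refl a, hs⟩, rfl⟩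
      · rw [hv a haT]; exact Submodule.zero_mem _
  exact main _ a rfl

theorem greedy_indep {K V M : Type*} [Field K] [AddCommGroup V] [Module K V] [LinearOrder M]
    (v : M → V) :
    LinearIndependent K
      (fun b : {b | v b ∉ Submodule.span K (v '' Set.Ioi b)} => v b) := by
  classical
  rw [linearIndependent_iff']
  intro s c hc
  by_contra! hcon
  obtain ⟨i, his, hi⟩ := hcon
  obtain ⟨j, hj, hmin⟩ := (s.filter (fun i => c i ≠ 0)).exists_minimal ⟨i, by simp [his, hi]⟩
  rw [Finset.mem_filter] at hj
  apply j.2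
  have : c j • v j = - ∑ i ∈ s.erase j, c i • v i := by
    rw [eq_neg_iff_add_eq_zero, Finset.add_sum_erase s (fun i => c i • v i) hj.1, hc]
  have h2 : v j = (c j)⁻¹ • (- ∑ i ∈ s.erase j, c i • v i) := by
    rw [← this, inv_smul_smul₀ hj.2]
  rw [h2]
  apply Submodule.smul_mem
  apply Submodule.neg_mem
  apply Submodule.sum_mem
  intro l hl
  rw [Finset.mem_erase] at hl
  by_cases hcl : c l = 0
  · simp [hcl]
  · apply Submodule.smul_mem
    apply Submodule.subset_span
    refine ⟨l, ?_, rfl⟩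
    rcases lt_or_ge j l with h | h
    · exact h
    · exact absurd (le_antisymm h (hmin (Finset.mem_filter.2 ⟨hl.2, hcl⟩) h)) hl.1

/-- Abstract version of the statement, in a finite dimensional algebra. -/
theorem abstract_monomials {K Q : Type*} [Field K] [CommRing Q] [Algebra K Q] (n k : ℕ)
    (hk : Module.rank K Q = k) (x : Fin n → Q) (ev : Q →ₗ[K] K) (h1 : ev 1 = 1)
    (hx : ∀ q t, ev (x t * q) = 0) (hJ : IsNilpotent (Ideal.span (Set.range x)))
    (hdec : ∀ q : Q, ∃ (c : K) (r : Fin n → Q), q = algebraMap K Q c + ∑ t, x t * r t) :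
    ∃ α : Fin k → Fin n → ℕ,
      (∀ i : Fin k, (i : ℕ) = 0 → α i = 0) ∧
      (∀ i j : Fin k, i ≤ j → (∑ t : Fin n, α i t) ≤ ∑ t : Fin n, α j t) ∧
      LinearIndependent K (fun i : Fin k => ∏ t, x t ^ α i t) ∧
      Submodule.span K (Set.range fun i : Fin k => ∏ t, x t ^ α i t) = ⊤ ∧
      (∀ i j : Fin k, (i : ℕ) ≠ 0 → (j : ℕ) ≠ 0 → ∀ c : Fin k → K,
        (∏ t, x t ^ α i t) * (∏ t, x t ^ α j t) = ∑ s, c s • ∏ t, x t ^ α s t →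
        ∀ s, s ≤ max i j → c s = 0) := by
  obtain ⟨N, hN⟩ := hJ
  let v : DegLex (Fin n →₀ ℕ) → Q := fun a => ∏ t, x t ^ (ofDegLex a) t
  let B : Set (DegLex (Fin n →₀ ℕ)) := {b | v b ∉ Submodule.span K (v '' Set.Ioi b)}
  let T : Set (DegLex (Fin n →₀ ℕ)) :=
    ofDegLex ⁻¹' (Set.Iic (Finsupp.equivFunOnFinite.symm (fun _ => N)))
  have hT : T.Finite := (Set.finite_Iic _).preimage (ofDegLex_injective.injOn)
  have hxN : ∀ t, x t ^ N = 0 := fun t => by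
    have hxt : x t ∈ Ideal.span (Set.range x) := Ideal.subset_span (Set.mem_range_self t)
    have : x t ^ N ∈ Ideal.span (Set.range x) ^ N := Ideal.pow_mem_pow hxt N
    rw [hN] at this
    simpa using this
  have hvT : ∀ a, a ∉ T → v a = 0 := by
    intro a ha
    have : ∃ t, N < ofDegLex a t := by
      by_contra! h
      refine ha (show ofDegLex a ≤ _ from fun t => ?_)
      simpa using h t
    obtain ⟨t, ht⟩ := this
    apply Finset.prod_eq_zero (Finset.mem_univ t)
    exact pow_eq_zero_of_le ht.le (hxN t)
  have hBT : B ⊆ T := by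
    intro b hb
    by_contra h
    apply hb
    rw [hvT b h]
    exact Submodule.zero_mem _
  have hBfin : B.Finite := hT.subset hBT
  have hgs := greedy_span (K := K) v T hT hvT
  have hind : LinearIndependent K (fun b : B => v b) := greedy_indep (K := K) v
  have happrox : ∀ m : ℕ, ∀ q : Q, ∃ s ∈ Algebra.adjoin K (Set.range x),
      q - s ∈ Ideal.span (Set.range x) ^ m := by
    intro m
    induction m with
    | zero => intro q; exact ⟨0, Subalgebra.zero_mem _, by simp⟩
    | succ m ih =>
      intro q
      obtain ⟨c, r, hq⟩ := hdec q
      choose s hs hs' using fun t => ih (r t)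
      refine ⟨algebraMap K Q c + ∑ t, x t * s t, ?_, ?_⟩
      · refine Subalgebra.add_mem _ (Subalgebra.algebraMap_mem _ _) (Subalgebra.sum_mem _ ?_)
        intro t _
        exact Subalgebra.mul_mem _ (Algebra.subset_adjoin ⟨t, rfl⟩) (hs t)
      · have : q - (algebraMap K Q c + ∑ t, x t * s t) = ∑ t, x t * (r t - s t) := by
          conv_lhs => rw [hq]
          simp only [mul_sub, Finset.sum_sub_distrib]
          ring
        rw [this, pow_succ']
        exact Ideal.sum_mem _ fun t _ =>
          Ideal.mul_mem_mul (Ideal.subset_span ⟨t, rfl⟩) (hs' t)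
  have hspanv : Submodule.span K (Set.range v) = ⊤ := by
    rw [eq_top_iff]
    intro q _
    obtain ⟨s, hs, hs'⟩ := happrox N q
    rw [hN] at hs'
    have hqs : q = s := by simpa [sub_eq_zero] using hs'
    rw [← hqs, Algebra.adjoin_range_eq_range_aeval] at hs
    obtain ⟨p, rfl⟩ := hs
    change MvPolynomial.aeval x p ∈ _
    rw [MvPolynomial.aeval_def, MvPolynomial.eval₂_eq']
    apply Submodule.sum_mem
    intro a _
    rw [← Algebra.smul_def]
    exact Submodule.smul_mem _ _ (Submodule.subset_span ⟨toDegLex a, rfl⟩)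
  have hspanB : ⊤ ≤ Submodule.span K (Set.range fun b : B => v b) := by
    rw [← hspanv, Submodule.span_le]
    rintro _ ⟨a, rfl⟩
    refine Submodule.span_mono ?_ (hgs a)
    rintro _ ⟨b, hb, rfl⟩
    exact ⟨⟨b, hb.2⟩, rfl⟩
  have : Fintype B := hBfin.fintype
  let bas : Module.Basis B K Q := Module.Basis.mk hind hspanB
  have hcard : Fintype.card B = k := by
    have := rank_eq_card_basis bas
    rw [hk] at this
    exact_mod_cast this.symm
  let e : Fin k ≃o B := Fintype.orderIsoFinOfCardEq B hcard
  let bas' : Module.Basis (Fin k) K Q := bas.reindex e.symm.toEquiv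
  have hbas' : ∀ i, bas' i = v (e i) := fun i => by simp [bas', bas]
  have hbas'' : (bas' : Fin k → Q) = fun i => v (e i) := funext hbas'
  have hle : ∀ a : DegLex (Fin n →₀ ℕ), 0 ≤ a := fun a => bot_le (a := a)
  have hv0 : v 0 = 1 := by
    change ∏ t, x t ^ ((0 : Fin n →₀ ℕ) t) = 1
    simp
  have hevv : ∀ a, 0 < a → ev (v a) = 0 := by
    intro a ha
    have : ∃ t, ofDegLex a t ≠ 0 := by
      by_contra! h
      exact ha.ne' (ofDegLex_injective (Finsupp.ext h))
    obtain ⟨t, ht⟩ := this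
    obtain ⟨m, hm⟩ := Nat.exists_eq_succ_of_ne_zero ht
    have : v a = x t * (x t ^ m * ∏ s ∈ Finset.univ.erase t, x s ^ (ofDegLex a) s) := by
      change ∏ s, x s ^ (ofDegLex a) s = _
      rw [← Finset.mul_prod_erase Finset.univ _ (Finset.mem_univ t), hm, pow_succ]
      ring
    rw [this, hx]
  have h0B : (0 : DegLex (Fin n →₀ ℕ)) ∈ B := by
    intro h
    have : Submodule.span K (v '' Set.Ioi 0) ≤ LinearMap.ker ev := by
      rw [Submodule.span_le]
      rintro _ ⟨a, ha, rfl⟩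
      exact hevv a ha
    have h2 := this h
    rw [hv0, LinearMap.mem_ker, h1] at h2
    exact one_ne_zero h2
  have hzero : ∀ i : Fin k, ((e i : B) : DegLex (Fin n →₀ ℕ)) = 0 ↔ (i : ℕ) = 0 := by
    have key : ∀ i : Fin k, (i : ℕ) = 0 → ((e i : B) : DegLex (Fin n →₀ ℕ)) = 0 := by
      intro i hi
      have : i ≤ e.symm ⟨0, h0B⟩ := by rw [Fin.le_def, hi]; exact Nat.zero_le _
      have h3 : e i ≤ ⟨0, h0B⟩ := by
        have := e.monotone this
        rwa [e.apply_symm_apply] at this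
      exact le_antisymm h3 (hle _)
    intro i
    refine ⟨fun h => ?_, key i⟩
    have hk0 : 0 < k := lt_of_le_of_lt (Nat.zero_le _) i.2
    have h4 : e i = e ⟨0, hk0⟩ := Subtype.ext (by rw [h, key ⟨0, hk0⟩ rfl])
    rw [e.injective h4]
  refine ⟨fun i t => ofDegLex (e i : DegLex (Fin n →₀ ℕ)) t, ?_, ?_, ?_, ?_, ?_⟩
  · intro i hi
    funext t
    change ofDegLex ((e i : B) : DegLex (Fin n →₀ ℕ)) t = 0
    rw [(hzero i).2 hi]; rfl
  · intro i j hij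
    have := Finsupp.DegLex.monotone_degree (e.monotone hij)
    simpa [Finsupp.degree_eq_sum] using this
  · have := bas'.linearIndependent
    rwa [hbas''] at this
  · have := bas'.span_eq
    rwa [hbas''] at this
  · intro i j hi hj c hc s hs
    have hprod : v ((e i : DegLex (Fin n →₀ ℕ)) + e j) = v (e i) * v (e j) := by
      simp [v, ofDegLex_add, pow_add, Finset.prod_mul_distrib]
    have hc' : v ((e i : DegLex (Fin n →₀ ℕ)) + e j) = ∑ s, c s • bas' s := by
      rw [hprod, hbas'']; exact hc
    have hmem := hgs ((e i : DegLex (Fin n →₀ ℕ)) + e j)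
    have himg : v '' {b | (e i : DegLex (Fin n →₀ ℕ)) + e j ≤ b ∧
        v b ∉ Submodule.span K (v '' Set.Ioi b)} ⊆
        bas' '' {s | (e i : DegLex (Fin n →₀ ℕ)) + e j ≤ e s} := by
      rintro _ ⟨b, hb, rfl⟩
      refine ⟨e.symm ⟨b, hb.2⟩, ?_, ?_⟩
      · simpa using hb.1
      · simp [hbas']
    have h5 := Submodule.span_mono himg hmem
    rw [Module.Basis.mem_span_image, hc'] at h5
    by_contra hcs
    have h6 : s ∈ (bas'.repr (∑ s, c s • bas' s)).support := by
      rw [Finsupp.mem_support_iff, bas'.repr_sum_self]; exact hcs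
    have h7 : (e i : DegLex (Fin n →₀ ℕ)) + e j ≤ e s := h5 h6
    have hi' : 0 < (e i : DegLex (Fin n →₀ ℕ)) :=
      lt_of_le_of_ne (hle _) fun h => hi ((hzero i).1 h.symm)
    have hj' : 0 < (e j : DegLex (Fin n →₀ ℕ)) :=
      lt_of_le_of_ne (hle _) fun h => hj ((hzero j).1 h.symm)
    rcases le_max_iff.1 hs with h | h
    · have h8 : (e s : DegLex (Fin n →₀ ℕ)) ≤ e i := e.monotone h
      exact absurd (h7.trans h8) (not_le.2 (lt_add_of_pos_right _ hj'))
    · have h8 : (e s : DegLex (Fin n →₀ ℕ)) ≤ e j := e.monotone h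
      exact absurd (h7.trans h8) (not_le.2 (lt_add_of_pos_left _ hi'))

theorem nilpotent_of_units {K Q : Type*} [Field K] [CommRing Q] [Algebra K Q]
    [Module.Finite K Q] {ι : Type*} (x : ι → Q) (h : ∀ t y, IsUnit (x t * y + 1)) :
    IsNilpotent (Ideal.span (Set.range x)) := by
  have hart : IsArtinianRing Q := IsArtinianRing.of_finite K _
  obtain ⟨N, hN⟩ := IsArtinianRing.isNilpotent_jacobson_bot (R := Q)
  refine ⟨N, ?_⟩
  rw [Ideal.zero_eq_bot, eq_bot_iff] at hN ⊢
  refine le_trans (Ideal.pow_right_mono ?_ N) hN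
  rw [Ideal.span_le]
  rintro _ ⟨t, rfl⟩
  change x t ∈ Ideal.jacobson ⊥
  rw [Ideal.mem_jacobson_bot]
  exact h t

theorem hadamard_analytic {n : ℕ} (g : EuclideanSpace ℂ (Fin n) → ℂ) (hg : AnalyticAt ℂ g 0) :
    ∃ h : Fin n → EuclideanSpace ℂ (Fin n) → ℂ, (∀ t, AnalyticAt ℂ (h t) 0) ∧
      ∀ᶠ x in 𝓝 0, g x = g 0 + ∑ t, x t * h t x := by
  obtain ⟨p, hp⟩ := hg
  have hrad : 0 < p.shift.radius := by
    rw [FormalMultilinearSeries.radius_shift]; exact hp.radius_pos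
  have hS := p.shift.hasFPowerSeriesOnBall hrad
  have hU := hS.unshift (z := g 0)
  have hpp : p.shift.unshift (g 0) = p := by
    ext1 m
    cases m with
    | zero =>
      ext w
      simp [FormalMultilinearSeries.unshift, hp.coeff_zero]
    | succ m =>
      exact LinearIsometryEquiv.symm_apply_apply (continuousMultilinearCurryRightEquiv' ℂ m _ _) _
  rw [hpp] at hU
  refine ⟨fun t x => p.shift.sum x (EuclideanSpace.single t 1), fun t => ?_, ?_⟩
  · exact ((ContinuousLinearMap.apply ℂ ℂ (EuclideanSpace.single t (1 : ℂ))).analyticAt _).comp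
      hS.analyticAt
  · filter_upwards [hp.eventually_hasSum, hU.hasFPowerSeriesAt.eventually_hasSum] with x hx1 hx2
    have hx := hx1.unique hx2
    rw [zero_add] at hx
    rw [hx, sub_zero]
    congr 1
    have : x = ∑ t, x t • EuclideanSpace.single t (1 : ℂ) := by
      ext s; simp [Finset.sum_apply, Pi.single_apply]
    have h2 := congrArg (p.shift.sum x) this
    rw [map_sum] at h2
    simpa using h2
end helpers

theorem mem_Ogerm {n : ℕ} {g : Cn n → ℂ} (hg : AnalyticAt ℂ g 0) :
    (g : Filter.Germ (𝓝 (0 : Cn n)) ℂ) ∈ Ogerm n := ⟨g, hg, rfl⟩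

/-- The germ of an analytic function. -/
def mkO {n : ℕ} (g : Cn n → ℂ) (hg : AnalyticAt ℂ g 0) : Ogerm n :=
  ⟨(g : Filter.Germ (𝓝 (0 : Cn n)) ℂ), mem_Ogerm hg⟩

theorem exists_mkO {n : ℕ} (G : Ogerm n) : ∃ g hg, G = mkO (n := n) g hg := by
  obtain ⟨_, g, hg, rfl⟩ := G
  exact ⟨g, hg, rfl⟩

theorem analyticAt_coord {n : ℕ} (t : Fin n) (y : Cn n) :
    AnalyticAt ℂ (fun x : Cn n => x t) y :=
  (EuclideanSpace.proj t : Cn n →L[ℂ] ℂ).analyticAt y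

/-- Evaluation at the origin. -/
def evO (n : ℕ) : Ogerm n →ₐ[ℂ] ℂ :=
  { (Filter.Germ.valueRingHom (X := Cn n) (E := ℂ) (x := 0)).comp (Ogerm n).val.toRingHom with
    commutes' := fun c => by
      change Filter.Germ.value (algebraMap ℂ (Filter.Germ (𝓝 (0 : Cn n)) ℂ) c) = c
      rw [Algebra.algebraMap_eq_smul_one, ← Filter.Germ.coe_one, ← Filter.Germ.coe_smul,
        Filter.Germ.value_ofFun]
      simp }

theorem evO_mkO {n : ℕ} (g : Cn n → ℂ) (hg : AnalyticAt ℂ g 0) : evO n (mkO g hg) = g 0 := rfl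

theorem isUnit_of_evO {n : ℕ} (G : Ogerm n) (h : evO n G ≠ 0) : IsUnit G := by
  obtain ⟨g, hg, rfl⟩ := exists_mkO G
  rw [evO_mkO] at h
  refine IsUnit.of_mul_eq_one (mkO (fun x => (g x)⁻¹) (hg.inv h)) (Subtype.ext ?_)
  change ((g * fun x => (g x)⁻¹ : Cn n → ℂ) : Filter.Germ (𝓝 (0 : Cn n)) ℂ) =
    ((1 : Cn n → ℂ) : Filter.Germ (𝓝 (0 : Cn n)) ℂ)
  rw [Filter.Germ.coe_eq]
  filter_upwards [hg.continuousAt.eventually_ne h] with x hx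
  simp [hx]

theorem coe_germ_sum {X ι : Type*} (l : Filter X) (s : Finset ι) (F : ι → X → ℂ) :
    ((fun x => ∑ i ∈ s, F i x : X → ℂ) : Filter.Germ l ℂ) =
      ∑ i ∈ s, (F i : Filter.Germ l ℂ) := by
  have h := map_sum (Filter.Germ.coeAddHom (M := ℂ) l) F s
  rw [← Finset.sum_fn]
  exact h

theorem coe_germ_prod {X ι : Type*} (l : Filter X) (s : Finset ι) (F : ι → X → ℂ) :
    ((fun x => ∏ i ∈ s, F i x : X → ℂ) : Filter.Germ l ℂ) =
      ∏ i ∈ s, (F i : Filter.Germ l ℂ) := by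
  have h := map_prod (Filter.Germ.coeMulHom (M := ℂ) l) F s
  rw [← Finset.prod_fn]
  exact h

/-- The coordinate germs. -/
def XO {n : ℕ} (t : Fin n) : Ogerm n := mkO (fun x : Cn n => x t) (analyticAt_coord t 0)

theorem coe_algebraMap_Ogerm {n : ℕ} (c : ℂ) :
    ((algebraMap ℂ (Ogerm n) c : Ogerm n) : Filter.Germ (𝓝 (0 : Cn n)) ℂ) =
      ((fun _ => c : Cn n → ℂ) : Filter.Germ (𝓝 (0 : Cn n)) ℂ) := by
  change algebraMap ℂ (Filter.Germ (𝓝 (0 : Cn n)) ℂ) c = _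
  rw [Algebra.algebraMap_eq_smul_one, ← Filter.Germ.coe_one, ← Filter.Germ.coe_smul]
  congr 1
  funext x
  simp

theorem comp_decomp {n : ℕ} (f : Cn n → Cn n) (hf0 : f 0 = 0) (hfa : AnalyticAt ℂ f 0)
    (hc : ∀ t, AnalyticAt ℂ (fun x => f x t) 0)
    (g : Cn n → ℂ) (hg : AnalyticAt ℂ g 0) (hgf : AnalyticAt ℂ (fun x => g (f x)) 0) :
    ∃ r : Fin n → Ogerm n, mkO (fun x => g (f x)) hgf =
      algebraMap ℂ (Ogerm n) (g 0) + ∑ t, mkO (fun x => f x t) (hc t) * r t := by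
  obtain ⟨h, hh, he⟩ := hadamard_analytic g hg
  have hhf : ∀ t, AnalyticAt ℂ (fun x => h t (f x)) 0 := fun t =>
    AnalyticAt.comp (g := h t) (f := f) (by rw [hf0]; exact hh t) hfa
  refine ⟨fun t => mkO _ (hhf t), Subtype.ext ?_⟩
  have hsum : ((∑ t, mkO (fun x => f x t) (hc t) * mkO _ (hhf t) : Ogerm n) :
      Filter.Germ (𝓝 (0 : Cn n)) ℂ) =
      ((fun x => ∑ t, f x t * h t (f x) : Cn n → ℂ) : Filter.Germ (𝓝 (0 : Cn n)) ℂ) := by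
    rw [coe_germ_sum, AddSubmonoidClass.coe_finsetSum]
    rfl
  rw [Subalgebra.coe_add, hsum, coe_algebraMap_Ogerm, ← Filter.Germ.coe_add]
  change ((fun x => g (f x) : Cn n → ℂ) : Filter.Germ (𝓝 (0 : Cn n)) ℂ) = _
  rw [Filter.Germ.coe_eq]
  have ht : Tendsto f (𝓝 0) (𝓝 0) := by
    have := hfa.continuousAt.tendsto
    rwa [hf0] at this
  exact ht.eventually he

theorem coe_monomial {n : ℕ} (a : Fin n → ℕ) :
    ((∏ t, XO t ^ a t : Ogerm n) : Filter.Germ (𝓝 (0 : Cn n)) ℂ) =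
      ((fun x => ∏ t : Fin n, (x t) ^ (a t) : Cn n → ℂ) :
          Filter.Germ (𝓝 (0 : Cn n)) ℂ) := by
  rw [coe_germ_prod, SubmonoidClass.coe_finsetProd]
  rfl

theorem coordIdeal_le {n : ℕ} (f : Cn n → Cn n) (hf0 : f 0 = 0) :
    ∀ G ∈ coordIdeal f, evO n G = 0 := by
  have : coordIdeal f ≤ RingHom.ker (evO n) := by
    rw [coordIdeal, Ideal.span_le]
    rintro G ⟨i, hi⟩
    change Filter.Germ.value (G : Filter.Germ (𝓝 (0 : Cn n)) ℂ) = 0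
    rw [hi, Filter.Germ.value_ofFun, hf0]
    rfl
  exact this

set_option maxHeartbeats 4000000 in
set_option synthInstance.maxHeartbeats 1000000 in
/-- **Lemma (statement 3).** For a finite map germ `f̄ : (ℂⁿ,0) → (ℂⁿ,0)` with
`k = dim_ℂ 𝒪ₙ/⟨f̄⟩` there is a minimal generating set `g₁ = 1, g₂, …, g_k` of the
pushforward module `f̄_* 𝒪ₙ` (that is, a family of monomials whose classes form a
ℂ-basis of `𝒪ₙ/⟨f̄⟩`), ordered by nondecreasing degree, such that whenever
`gᵢ gⱼ = Σ_s Γˢᵢⱼ(f̄(x)) g_s` with `i, j ≠ 1`, the coefficients `Γˢᵢⱼ` with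
`s ≤ max i j` vanish at the origin. -/
theorem exists_ordered_monomial_generators (n k : ℕ) (fb : Cn n → Cn n)
    (hf0 : fb 0 = 0) (hfa : AnalyticAt ℂ fb 0) (hfin : FiniteGerm fb)
    (hk : multGerm fb = k) :
    ∃ (g : Fin k → Ogerm n) (α : Fin k → Fin n → ℕ),
      (∀ i : Fin k, (i : ℕ) = 0 → g i = 1) ∧
      (∀ i : Fin k, (g i : Filter.Germ (𝓝 (0 : Cn n)) ℂ) =
        ((fun x => ∏ t : Fin n, (x t) ^ (α i t) : Cn n → ℂ) :
          Filter.Germ (𝓝 (0 : Cn n)) ℂ)) ∧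
      (∀ i j : Fin k, i ≤ j → (∑ t : Fin n, α i t) ≤ ∑ t : Fin n, α j t) ∧
      LinearIndependent ℂ (fun i : Fin k => Ideal.Quotient.mk (coordIdeal fb) (g i)) ∧
      Submodule.span ℂ
        (Set.range fun i : Fin k => Ideal.Quotient.mk (coordIdeal fb) (g i)) = ⊤ ∧
      (∀ i j : Fin k, (i : ℕ) ≠ 0 → (j : ℕ) ≠ 0 →
        ∀ Γ : Fin k → (Cn n → ℂ), (∀ s, AnalyticAt ℂ (Γ s) 0) →
          ((g i : Filter.Germ (𝓝 (0 : Cn n)) ℂ) * (g j : Filter.Germ (𝓝 (0 : Cn n)) ℂ) =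
            ∑ s : Fin k, ((fun x => Γ s (fb x) : Cn n → ℂ) :
              Filter.Germ (𝓝 (0 : Cn n)) ℂ) * (g s : Filter.Germ (𝓝 (0 : Cn n)) ℂ)) →
          ∀ s : Fin k, s ≤ max i j → Γ s 0 = 0) := by
  have hc : ∀ t, AnalyticAt ℂ (fun x => fb x t) 0 := fun t =>
    AnalyticAt.comp (g := fun x : Cn n => x t) (f := fb) (analyticAt_coord t _) hfa
  have hXdec : ∀ G : Ogerm n, ∃ r : Fin n → Ogerm n,
      G = algebraMap ℂ (Ogerm n) (evO n G) + ∑ t, XO t * r t := by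
    intro G
    obtain ⟨g, hg, rfl⟩ := exists_mkO G
    exact comp_decomp (fun x => x) rfl analyticAt_id (fun t => analyticAt_coord t 0) g hg hg
  let π : Ogerm n →ₐ[ℂ] (Ogerm n ⧸ coordIdeal fb) := Ideal.Quotient.mkₐ ℂ (coordIdeal fb)
  have hπ : Function.Surjective π := Ideal.Quotient.mk_surjective
  let ev : (Ogerm n ⧸ coordIdeal fb) →ₐ[ℂ] ℂ :=
    Ideal.Quotient.liftₐ (coordIdeal fb) (evO n) (coordIdeal_le fb hf0)
  have hev : ∀ G, ev (π G) = evO n G := fun G => rfl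
  have hfd : Module.Finite ℂ (Ogerm n ⧸ coordIdeal fb) := Module.rank_lt_aleph0_iff.1 hfin
  have hk' : Module.rank ℂ (Ogerm n ⧸ coordIdeal fb) = k := by
    rw [← hk]; rfl
  have hevX : ∀ t : Fin n, evO n (XO t) = 0 := fun t => rfl
  have hnil : IsNilpotent (Ideal.span (Set.range fun t : Fin n => π (XO t))) := by
    refine nilpotent_of_units (K := ℂ) (Q := Ogerm n ⧸ coordIdeal fb) _ ?_
    intro t y
    obtain ⟨Y, rfl⟩ := hπ y
    rw [← map_mul, ← map_one π, ← map_add]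
    apply IsUnit.map
    apply isUnit_of_evO
    rw [map_add, map_mul, hevX, map_one]
    simp
  obtain ⟨α, h0, hdeg, hli, hsp, hprod⟩ := abstract_monomials (K := ℂ)
    (Q := Ogerm n ⧸ coordIdeal fb) n k hk' (fun t => π (XO t)) ev.toLinearMap (map_one ev)
    (fun q t => by
      change ev (π (XO t) * q) = 0
      rw [map_mul, hev, hevX, zero_mul])
    hnil
    (fun q => by
      obtain ⟨G, rfl⟩ := hπ q
      obtain ⟨r, hr⟩ := hXdec G
      refine ⟨evO n G, fun t => π (r t), ?_⟩
      conv_lhs => rw [hr]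
      rw [map_add, AlgHom.commutes, map_sum]
      simp only [map_mul])
  have hmon : ∀ i, π (∏ t, XO t ^ α i t) = ∏ t, π (XO t) ^ α i t := fun i => by
    rw [map_prod]; simp only [map_pow]
  have hmon' : (fun i : Fin k => Ideal.Quotient.mk (coordIdeal fb) (∏ t, XO t ^ α i t)) =
      fun i => ∏ t, π (XO t) ^ α i t := funext hmon
  refine ⟨fun i => ∏ t, XO t ^ α i t, α, ?_, fun i => coe_monomial (α i), hdeg, ?_, ?_, ?_⟩
  · intro i hi
    simp [h0 i hi]
  · rw [hmon']; exact hli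
  · rw [hmon']; exact hsp
  · intro i j hi hj Γ hΓ heq
    apply hprod i j hi hj (fun s => Γ s 0)
    have hΓf : ∀ s, AnalyticAt ℂ (fun x => Γ s (fb x)) 0 := fun s =>
      AnalyticAt.comp (g := Γ s) (f := fb) (by rw [hf0]; exact hΓ s) hfa
    have heq' : (∏ t, XO t ^ α i t : Ogerm n) * ∏ t, XO t ^ α j t =
        ∑ s, mkO _ (hΓf s) * ∏ t, XO t ^ α s t := by
      apply Subtype.ext
      rw [AddSubmonoidClass.coe_finsetSum]
      exact heq
    have hΓπ : ∀ s, π (mkO _ (hΓf s)) = algebraMap ℂ _ (Γ s 0) := by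
      intro s
      obtain ⟨r, hr⟩ := comp_decomp fb hf0 hfa hc (Γ s) (hΓ s) (hΓf s)
      rw [hr, map_add, AlgHom.commutes]
      have : π (∑ t, mkO (fun x => fb x t) (hc t) * r t) = 0 := by
        apply Ideal.Quotient.eq_zero_iff_mem.2
        exact Ideal.sum_mem _ fun t _ =>
          Ideal.mul_mem_right _ _ (Ideal.subset_span ⟨t, rfl⟩)
      rw [this, add_zero]
    have h9 := congrArg π heq'
    rw [map_mul, map_sum, hmon, hmon] at h9
    rw [h9]
    apply Finset.sum_congr rfl
    intro s _
    rw [map_mul, hΓπ, hmon, Algebra.smul_def]
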